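/- Conditional convergence criterion for S-sums: let k ≥ 1, let a_1,…,a_k be positive integers and x_1,…,x_k nonzero reals. The S-sum S_{a_1,…,a_k}(x_1,…,x_k; n) is convergent but not absolutely convergent as n → ∞ if and only if a_1 = 1, x_1 = −1, and |x_2| ≤ 1, |x_2 x_3| ≤ 1, …, |x_2 x_3 ⋯ x_k| ≤ 1. -/

import Mathlib

open Filter

/-- S-sums: `SSum [(a₁,x₁),…] n` is `S_{a₁,…}(x₁,…; n)`; the empty sum equals `1`. -/
noncomputable def SSum : List (ℕ × ℝ) → ℕ → ℝ
  | [], _ => 1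
  | (a, x) :: t, n => ∑ i ∈ Finset.Icc 1 n, x ^ i / (i : ℝ) ^ a * SSum t i

/-!
The generating function of the increments of `S_{a, a₂, …}(x, x₂, …; n)` is obtained from that of
`S_{a₂, …}(x₂, …; n)` by multiplying by `1 / (1 - z)`, rescaling `z` by `x` and averaging `a` times
over the segment from `0` to `z`; up to the factor `x`, each operation preserves positivity and
bounds away from zero. By Abel's theorem a convergent S-sum with all partial products bounded by one
therefore has a nonzero limit, and an S-sum with leading index and argument `1, 1` dominates a
multiple of the harmonic series. Nonzero limits force polynomially bounded S-sums, in particular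
convergent ones, to have partial products `|x₁|, |x₁ x₂|, …` at most one.

Conversely, if these products are at most one, an S-sum of depth `k` is at most `2 ^ k * √n`. This
gives absolute convergence when `a₁ ≥ 2` or `|x₁| < 1`, and, by summation by parts, convergence when
`a₁ = 1` and `x₁ = -1`.
-/

section Series

open Finset Topology

theorem hasSum_sum_range_mul_pow {𝕜 : Type*} [NormedField 𝕜] [CompleteSpace 𝕜] {u : ℕ → 𝕜} {w : 𝕜}
    (hw : ‖w‖ < 1) (hu : Summable fun i => ‖u i * w ^ i‖) :
    HasSum (fun i => (∑ l ∈ range (i + 1), u l) * w ^ i) ((∑' i, u i * w ^ i) * (1 - w)⁻¹) := by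
  have hgeom : Summable fun i => ‖w ^ i‖ := by
    simpa only [norm_pow] using summable_geometric_of_lt_one (norm_nonneg w) hw
  have hprod := hasSum_sum_range_mul_of_summable_norm hu hgeom
  rw [tsum_geometric_of_norm_lt_one hw] at hprod
  refine hprod.congr_fun fun i => ?_
  rw [sum_mul]
  refine sum_congr rfl fun l hl => ?_
  rw [mul_assoc, ← pow_add, Nat.add_sub_cancel' (mem_range_succ_iff.mp hl)]

theorem norm_mul_pow_le_of_norm_le {𝕜 : Type*} [NormedField 𝕜] {z w : 𝕜} (h : ‖z‖ ≤ ‖w‖) (c : 𝕜)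
    (i : ℕ) : ‖c * z ^ i‖ ≤ ‖c * w ^ i‖ := by
  rw [norm_mul, norm_mul, norm_pow, norm_pow]
  gcongr

theorem norm_mul_le_of_mem_Icc {s : ℝ} (hs : s ∈ Set.Icc (0 : ℝ) 1) (w : ℝ) : ‖s * w‖ ≤ ‖w‖ := by
  rw [norm_mul, Real.norm_of_nonneg hs.1]
  exact mul_le_of_le_one_left (norm_nonneg w) hs.2

theorem tsum_div_succ_mul_pow_eq_integral {u : ℕ → ℝ} {w : ℝ}
    (hu : Summable fun i => u i * w ^ i) :
    ∑' i, u i / ((i : ℝ) + 1) * w ^ i = ∫ s in (0 : ℝ)..1, ∑' i, u i * (s * w) ^ i := by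
  have hterm (i : ℕ) : ∫ s in (0 : ℝ)..1, u i * (s * w) ^ i = u i / ((i : ℝ) + 1) * w ^ i := by
    simp only [mul_pow, intervalIntegral.integral_const_mul, intervalIntegral.integral_mul_const,
      integral_pow, one_pow, zero_pow i.succ_ne_zero, sub_zero]
    ring
  have hunit {s : ℝ} (hs : s ∈ Set.uIoc (0 : ℝ) 1) : s ∈ Set.Icc (0 : ℝ) 1 :=
    Set.Ioc_subset_Icc_self (Set.uIoc_of_le (zero_le_one' ℝ) ▸ hs)
  have hsum : HasSum (fun i => ∫ s in (0 : ℝ)..1, u i * (s * w) ^ i)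
      (∫ s in (0 : ℝ)..1, ∑' i, u i * (s * w) ^ i) := by
    have hbound {s : ℝ} (hs : s ∈ Set.uIoc (0 : ℝ) 1) (i : ℕ) :
        ‖u i * (s * w) ^ i‖ ≤ ‖u i * w ^ i‖ :=
      norm_mul_pow_le_of_norm_le (norm_mul_le_of_mem_Icc (hunit hs) w) _ i
    exact intervalIntegral.hasSum_integral_of_dominated_convergence (fun i _ => ‖u i * w ^ i‖)
      (fun i => Continuous.aestronglyMeasurable (by fun_prop))
      (fun i => .of_forall fun s hs => hbound hs i) (.of_forall fun _ _ => hu.norm)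
      intervalIntegrable_const
      (.of_forall fun s hs => (hu.norm.of_norm_bounded (hbound hs)).hasSum)
  simpa only [hterm] using hsum.tsum_eq

/-- The power series `∑ u i * z ^ i` converges absolutely on the segment from `0` to `w` and its sum
is nonnegative there. This cone of sequences is stable under the operations that build an S-sum from
a shorter one. -/
def NonnegOnSegment (u : ℕ → ℝ) (w : ℝ) : Prop :=
  (Summable fun i => u i * w ^ i) ∧ ∀ s ∈ Set.Icc (0 : ℝ) 1, 0 ≤ ∑' i, u i * (s * w) ^ i

namespace NonnegOnSegment

variable {u v : ℕ → ℝ} {w : ℝ}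

theorem tsum_nonneg (h : NonnegOnSegment u w) : 0 ≤ ∑' i, u i * w ^ i := by
  simpa only [one_mul] using h.2 1 ⟨zero_le_one, le_rfl⟩

theorem segment (h : NonnegOnSegment u w) {s : ℝ} (hs : s ∈ Set.Icc (0 : ℝ) 1) :
    NonnegOnSegment u (s * w) := by
  refine ⟨h.1.norm.of_norm_bounded fun i =>
    norm_mul_pow_le_of_norm_le (norm_mul_le_of_mem_Icc hs w) (u i) i, fun r hr => ?_⟩
  simpa only [mul_assoc] using
    h.2 (r * s) ⟨mul_nonneg hr.1 hs.1, mul_le_one₀ hr.2 hs.1 hs.2⟩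

theorem add (hu : NonnegOnSegment u w) (hv : NonnegOnSegment v w) : NonnegOnSegment (u + v) w := by
  refine ⟨by simpa only [Pi.add_apply, add_mul] using hu.1.add hv.1, fun s hs => ?_⟩
  simp only [Pi.add_apply, add_mul]
  rw [(hu.segment hs).1.tsum_add (hv.segment hs).1]
  exact add_nonneg (hu.2 s hs) (hv.2 s hs)

theorem const_smul (hu : NonnegOnSegment u w) {c : ℝ} (hc : 0 ≤ c) :
    NonnegOnSegment (c • u) w := by
  refine ⟨by simpa only [Pi.smul_apply, smul_eq_mul, mul_assoc] using hu.1.mul_left c,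
    fun s hs => ?_⟩
  simp only [Pi.smul_apply, smul_eq_mul, mul_assoc, tsum_mul_left]
  exact mul_nonneg hc (hu.2 s hs)

theorem mul_pow {x : ℝ} (hu : NonnegOnSegment u (w * x)) :
    NonnegOnSegment (fun i => u i * x ^ i) w := by
  have hpow (z : ℝ) (i : ℕ) : u i * x ^ i * z ^ i = u i * (z * x) ^ i := by
    rw [_root_.mul_pow]; ring
  simpa only [NonnegOnSegment, hpow, mul_assoc] using hu

theorem sum_range (hu : NonnegOnSegment u w) (hw : |w| < 1) :
    NonnegOnSegment (fun i => ∑ l ∈ range (i + 1), u l) w := by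
  refine ⟨(hasSum_sum_range_mul_pow hw hu.1.norm).summable, fun s hs => ?_⟩
  have hsw : |s * w| < 1 := (norm_mul_le_of_mem_Icc hs w).trans_lt hw
  rw [(hasSum_sum_range_mul_pow hsw (hu.segment hs).1.norm).tsum_eq]
  exact mul_nonneg (hu.2 s hs) (inv_nonneg.mpr (sub_nonneg.mpr (abs_lt.mp hsw).2.le))

theorem div_succ (hu : NonnegOnSegment u w) :
    NonnegOnSegment (fun i => u i / ((i : ℝ) + 1)) w := by
  refine ⟨hu.1.norm.of_norm_bounded fun i => ?_, fun s hs => ?_⟩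
  · rw [div_mul_eq_mul_div, norm_div]
    refine div_le_self (norm_nonneg _) ?_
    rw [Real.norm_of_nonneg (by positivity)]
    exact le_add_of_nonneg_left i.cast_nonneg
  · rw [tsum_div_succ_mul_pow_eq_integral (hu.segment hs).1]
    exact intervalIntegral.integral_nonneg zero_le_one (hu.segment hs).2

theorem div_succ_pow (hu : NonnegOnSegment u w) (a : ℕ) :
    NonnegOnSegment (fun i => u i / ((i : ℝ) + 1) ^ a) w := by
  induction a with
  | zero => simpa only [pow_zero, div_one] using hu
  | succ a ih => simpa only [pow_succ, div_div] using ih.div_succ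

/-- `1 / (1 - z)` is at least `1 / 2` on the open unit interval. -/
theorem one_sub_half_single (hw : |w| < 1) :
    NonnegOnSegment (1 - (2⁻¹ : ℝ) • Pi.single 0 1) w := by
  have hterm (z : ℝ) (i : ℕ) : (1 - (2⁻¹ : ℝ) • Pi.single 0 1 : ℕ → ℝ) i * z ^ i =
      z ^ i - (Pi.single 0 2⁻¹ : ℕ → ℝ) i := by
    rcases eq_or_ne i 0 with rfl | hi
    · simp
    · simp [hi]
  have hsum {z : ℝ} (hz : |z| < 1) :
      HasSum (fun i => (1 - (2⁻¹ : ℝ) • Pi.single 0 1 : ℕ → ℝ) i * z ^ i) ((1 - z)⁻¹ - 2⁻¹) := by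
    simp only [hterm]
    have hsingle : HasSum (Pi.single 0 2⁻¹ : ℕ → ℝ) 2⁻¹ := hasSum_pi_single 0 _
    exact (hasSum_geometric_of_abs_lt_one hz).sub hsingle
  refine ⟨(hsum hw).summable, fun s hs => ?_⟩
  have hsw : |s * w| < 1 := (norm_mul_le_of_mem_Icc hs w).trans_lt hw
  obtain ⟨hlow, hupp⟩ := abs_lt.mp hsw
  rw [(hsum hsw).tsum_eq, sub_nonneg]
  exact inv_anti₀ (by linarith) (by linarith)

theorem sum_range_le_of_tendsto {A : ℝ}
    (hu : Tendsto (fun n => ∑ i ∈ range n, u i) atTop (𝓝 A)) (hv : 0 ≤ v)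
    (h : ∀ w ∈ Set.Ioo (0 : ℝ) 1, NonnegOnSegment (u - v) w) (N : ℕ) :
    ∑ i ∈ range N, v i ≤ A := by
  have hpartial : Tendsto (fun w : ℝ => ∑ i ∈ range N, v i * w ^ i) (𝓝[<] 1)
      (𝓝 (∑ i ∈ range N, v i)) := by
    have hcont : Continuous fun w : ℝ => ∑ i ∈ range N, v i * w ^ i := by fun_prop
    simpa only [one_pow, mul_one] using (hcont.tendsto 1).mono_left nhdsWithin_le_nhds
  refine le_of_tendsto_of_tendsto hpartial (Real.tendsto_tsum_powerSeries_nhdsWithin_lt hu) ?_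
  filter_upwards [Ioo_mem_nhdsLT (zero_lt_one' ℝ)] with w hw
  have hu_summable : Summable fun i => u i * w ^ i :=
    summable_powerSeries_of_norm_lt_one hu.cauchySeq
      ((Real.norm_of_nonneg hw.1.le).trans_lt hw.2)
  have hdiff := (h w hw).1
  have hdiff_nonneg := (h w hw).tsum_nonneg
  simp only [Pi.sub_apply, sub_mul] at hdiff hdiff_nonneg
  have hv_summable : Summable fun i => v i * w ^ i := by
    simpa only [sub_sub_cancel] using hu_summable.sub hdiff
  rw [hu_summable.tsum_sub hv_summable, sub_nonneg] at hdiff_nonneg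
  exact (hv_summable.sum_le_tsum _ fun i _ => mul_nonneg (hv i) (pow_nonneg hw.1.le i)).trans
    hdiff_nonneg

end NonnegOnSegment

theorem exists_tendsto_alternating_sum {E : Type*} [NormedAddCommGroup E] [NormedSpace ℝ E]
    [CompleteSpace E] {b : ℕ → E} (hb : Tendsto b atTop (𝓝 0))
    (hvar : Summable fun i => ‖b (i + 1) - b i‖) :
    ∃ A, Tendsto (fun n => ∑ i ∈ range n, (-1 : ℝ) ^ i • b i) atTop (𝓝 A) := by
  have hparts (n : ℕ) : ∑ i ∈ range n, (-1 : ℝ) ^ i • b i =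
      (2⁻¹ : ℝ) • (b 0 - (-1 : ℝ) ^ n • b n -
        ∑ i ∈ range n, (-1 : ℝ) ^ i • (b (i + 1) - b i)) := by
    induction n with
    | zero => simp
    | succ n ih =>
      rw [sum_range_succ, sum_range_succ, ih]
      module
  have hnorm (n : ℕ) (y : E) : ‖(-1 : ℝ) ^ n • y‖ = ‖y‖ := by simp [norm_smul]
  have hboundary : Tendsto (fun n => (-1 : ℝ) ^ n • b n) atTop (𝓝 0) :=
    squeeze_zero_norm (fun n => (hnorm n _).le) (tendsto_zero_iff_norm_tendsto_zero.mp hb)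
  have hrest : Summable fun i => (-1 : ℝ) ^ i • (b (i + 1) - b i) :=
    .of_norm (by simpa only [hnorm] using hvar)
  simp only [hparts]
  exact ⟨_, ((hboundary.const_sub _).sub hrest.hasSum.tendsto_sum_nat).const_smul _⟩

theorem sum_Icc_inv_sqrt_le (n : ℕ) : ∑ i ∈ Icc 1 n, (√(i : ℝ))⁻¹ ≤ 2 * √(n : ℝ) := by
  induction n with
  | zero => simp
  | succ n ih =>
    rw [sum_Icc_succ_top n.succ_pos]
    have hpos : 0 < √((n + 1 : ℕ) : ℝ) := by positivity
    have hsq : √((n + 1 : ℕ) : ℝ) ^ 2 = √(n : ℝ) ^ 2 + 1 := by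
      rw [Real.sq_sqrt (by positivity), Real.sq_sqrt (by positivity), Nat.cast_succ]
    have hstep : (√((n + 1 : ℕ) : ℝ))⁻¹ ≤ 2 * √((n + 1 : ℕ) : ℝ) - 2 * √(n : ℝ) := by
      rw [inv_le_iff_one_le_mul₀ hpos]
      nlinarith [sq_nonneg (√((n + 1 : ℕ) : ℝ) - √(n : ℝ))]
    linarith

theorem summable_sqrt_div_sq : Summable fun i : ℕ => √((i : ℝ) + 1) / ((i : ℝ) + 1) ^ 2 := by
  have hrpow : Summable fun i : ℕ => 1 / ((i + 1 : ℕ) : ℝ) ^ (3 / 2 : ℝ) :=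
    (summable_nat_add_iff 1).mpr (Real.summable_one_div_nat_rpow.mpr (by norm_num))
  refine hrpow.congr fun i => ?_
  have hi : (0 : ℝ) < (i : ℝ) + 1 := by positivity
  rw [Real.sqrt_eq_rpow, ← Real.rpow_natCast, ← Real.rpow_sub hi, one_div, ← Real.rpow_neg,
    Nat.cast_succ]
  · norm_num
  · positivity

theorem div_sqrt_div_self (K y : ℝ) : K / √y / y = K * (√y / y ^ 2) := by
  rw [div_eq_mul_inv K, ← Real.sqrt_div_self]
  ring

theorem exists_tendsto_alternating_sum_div_succ {s : ℕ → ℝ} {K : ℝ}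
    (hs : ∀ i, |s i| ≤ K * √((i : ℝ) + 1)) (hdiff : ∀ i, |s (i + 1) - s i| ≤ K / √((i : ℝ) + 1)) :
    ∃ A, Tendsto (fun n => ∑ i ∈ range n, (-1) ^ i * (s i / ((i : ℝ) + 1))) atTop (𝓝 A) := by
  refine exists_tendsto_alternating_sum ?_ ?_
  · have hsqrt : Tendsto (fun i : ℕ => √((i : ℝ) + 1)) atTop atTop :=
      Real.tendsto_sqrt_atTop.comp
        (tendsto_atTop_add_const_right _ _ tendsto_natCast_atTop_atTop)
    refine squeeze_zero_norm (fun i => ?_) (hsqrt.const_div_atTop K)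
    rw [norm_div, Real.norm_eq_abs, Real.norm_of_nonneg (by positivity),
      div_le_div_iff₀ (by positivity) (by positivity)]
    calc |s i| * √((i : ℝ) + 1) ≤ K * √((i : ℝ) + 1) * √((i : ℝ) + 1) := by gcongr; exact hs i
      _ = K * ((i : ℝ) + 1) := by rw [mul_assoc, Real.mul_self_sqrt (by positivity)]
  · refine ((summable_sqrt_div_sq.mul_left (2 * K)).of_nonneg_of_le (fun _ => norm_nonneg _)
      fun i => ?_)
    have hsplit : s (i + 1) / (((i + 1 : ℕ) : ℝ) + 1) - s i / ((i : ℝ) + 1) =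
        (s (i + 1) - s i) / ((i : ℝ) + 2) - s i / (((i : ℝ) + 1) * ((i : ℝ) + 2)) := by
      push_cast
      field_simp
      ring
    rw [hsplit]
    calc ‖(s (i + 1) - s i) / ((i : ℝ) + 2) - s i / (((i : ℝ) + 1) * ((i : ℝ) + 2))‖
        ≤ |s (i + 1) - s i| / ((i : ℝ) + 2) + |s i| / (((i : ℝ) + 1) * ((i : ℝ) + 2)) := by
          refine (norm_sub_le _ _).trans_eq ?_
          rw [norm_div, norm_div, Real.norm_of_nonneg (by positivity : (0 : ℝ) ≤ (i : ℝ) + 2),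
            Real.norm_of_nonneg (by positivity : (0 : ℝ) ≤ ((i : ℝ) + 1) * ((i : ℝ) + 2))]
          rfl
      _ ≤ K / √((i : ℝ) + 1) / ((i : ℝ) + 1) +
          K * √((i : ℝ) + 1) / (((i : ℝ) + 1) * ((i : ℝ) + 1)) := by
          gcongr
          · exact (abs_nonneg _).trans (hdiff i)
          · exact hdiff i
          · norm_num
          · exact (abs_nonneg _).trans (hs i)
          · exact hs i
          · norm_num
      _ = 2 * K * (√((i : ℝ) + 1) / ((i : ℝ) + 1) ^ 2) := by
          rw [div_sqrt_div_self]
          ring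

theorem tendsto_zero_of_isBigO_pow_mul {s : ℕ → ℝ} {r : ℝ} {b : ℕ} (hr : 1 < |r|)
    (h : (fun n => r ^ n * s n) =O[atTop] fun n => (n : ℝ) ^ b) : Tendsto s atTop (𝓝 0) := by
  have hr0 : r ≠ 0 := abs_pos.mp (one_pos.trans hr)
  have hlittle := h.trans_isLittleO (isLittleO_pow_const_const_pow_of_one_lt (R := ℝ) b hr)
  refine squeeze_zero_norm (fun n => ?_) (tendsto_norm_zero.comp hlittle.tendsto_div_nhds_zero)
  rw [Function.comp_apply, norm_div, norm_mul, norm_pow, norm_pow, Real.norm_eq_abs |r|, abs_abs,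
    Real.norm_eq_abs r, mul_div_cancel_left₀ _ (pow_ne_zero n (abs_ne_zero.mpr hr0))]

end Series

/-- The condition `|r| ≤ 1, |r x₁| ≤ 1, …, |r x₁ ⋯ x_k| ≤ 1` on the arguments `x₁, …, x_k` of an
S-sum with prefactor `r`. -/
def PartialProdsLeOne : ℝ → List (ℕ × ℝ) → Prop
  | r, [] => |r| ≤ 1
  | r, (_, x) :: t => |r| ≤ 1 ∧ PartialProdsLeOne (r * x) t

namespace PartialProdsLeOne

variable {r s : ℝ} {t : List (ℕ × ℝ)}

theorem abs_le_one (h : PartialProdsLeOne r t) : |r| ≤ 1 := by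
  cases t with
  | nil => exact h
  | cons p t => exact h.1

theorem of_abs_le (h : PartialProdsLeOne r t) (hs : |s| ≤ |r|) : PartialProdsLeOne s t := by
  induction t generalizing r s with
  | nil => exact hs.trans h
  | cons p t ih =>
    refine ⟨hs.trans h.1, ih h.2 ?_⟩
    rw [abs_mul, abs_mul]
    gcongr

theorem map_abs_iff :
    PartialProdsLeOne |r| (t.map (Prod.map id abs)) ↔ PartialProdsLeOne r t := by
  induction t generalizing r with
  | nil => simp only [List.map_nil, PartialProdsLeOne, abs_abs]
  | cons p t ih => simp only [List.map_cons, Prod.map, PartialProdsLeOne, abs_abs, ← abs_mul, ih]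

theorem ofFn_succ_iff {k : ℕ} {a : Fin (k + 1) → ℕ} {x : Fin (k + 1) → ℝ} :
    PartialProdsLeOne r (List.ofFn fun i : Fin k => (a i.succ, x i.succ)) ↔
      ∀ j : Fin (k + 1), |r * ∏ i ∈ Finset.Ioc 0 j, x i| ≤ 1 := by
  induction k generalizing r with
  | zero => simp [PartialProdsLeOne]
  | succ k ih =>
    have hprod (j : Fin (k + 1)) :
        ∏ i ∈ Finset.Ioc 0 j.succ, x i = x 1 * ∏ i ∈ Finset.Ioc 0 j, x i.succ := by
      have hIoc : Finset.Ioc 0 j.succ = Finset.Icc (Fin.succ 0) j.succ := by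
        ext i
        rw [Finset.mem_Ioc, Finset.mem_Icc, ← Fin.castSucc_lt_iff_succ_le,
          Fin.castSucc_zero]
      rw [hIoc, Fin.prod_Icc_succ, ← Finset.mul_prod_Ioc_eq_prod_Icc j.zero_le,
        Fin.succ_zero_eq_one]
    rw [List.ofFn_succ, PartialProdsLeOne, Fin.forall_fin_succ,
      ih (a := fun i => a i.succ) (x := fun i => x i.succ)]
    simp only [hprod, Finset.Ioc_self, Finset.prod_empty, mul_one, mul_assoc, Fin.succ_zero_eq_one]

end PartialProdsLeOne

namespace SSum

open Finset Topology Asymptotics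

/-- The backward differences of an S-sum: `increment t i = SSum t (i + 1) - SSum t i` when `t` is
nonempty. The empty sum, constantly `1`, is regarded as vanishing at `0` here, so that
`SSum t (n + 1)` is always a sum of increments. -/
noncomputable def increment : List (ℕ × ℝ) → ℕ → ℝ
  | [] => Pi.single 0 1
  | (a, x) :: t => fun i => x ^ (i + 1) / ((i : ℝ) + 1) ^ a * SSum t (i + 1)

theorem cons_succ (a : ℕ) (x : ℝ) (t : List (ℕ × ℝ)) (n : ℕ) :
    SSum ((a, x) :: t) (n + 1) = SSum ((a, x) :: t) n + increment ((a, x) :: t) n := by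
  rw [SSum, SSum, sum_Icc_succ_top n.succ_pos, increment, Nat.cast_succ]

theorem sum_range_increment (t : List (ℕ × ℝ)) (n : ℕ) :
    ∑ i ∈ range (n + 1), increment t i = SSum t (n + 1) := by
  rcases t with _ | ⟨⟨a, x⟩, t⟩
  · simp [increment, SSum]
  · induction n with
    | zero => simp [increment, SSum]
    | succ n ih => rw [sum_range_succ, ih, cons_succ a x t (n + 1)]

theorem succ_succ (t : List (ℕ × ℝ)) (n : ℕ) :
    SSum t (n + 1 + 1) = SSum t (n + 1) + increment t (n + 1) := by
  rw [← sum_range_increment, sum_range_succ, sum_range_increment]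

theorem tendsto_sum_increment_iff {t : List (ℕ × ℝ)} {l : Filter ℝ} :
    Tendsto (fun n => ∑ i ∈ range n, increment t i) atTop l ↔ Tendsto (SSum t) atTop l := by
  rw [← tendsto_add_atTop_iff_nat 1, ← tendsto_add_atTop_iff_nat (f := SSum t) 1]
  simp only [sum_range_increment]

theorem tendsto_sum_smul_increment {t : List (ℕ × ℝ)} {A : ℝ} (h : Tendsto (SSum t) atTop (𝓝 A))
    (p : ℝ) : Tendsto (fun n => ∑ i ∈ range n, (p • increment t) i) atTop (𝓝 (p * A)) := by
  simpa only [Pi.smul_apply, smul_eq_mul, mul_sum] using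
    (tendsto_sum_increment_iff.mpr h).const_mul p

theorem exists_tendsto_of_summable_increment {t : List (ℕ × ℝ)} (h : Summable (increment t)) :
    ∃ A, Tendsto (SSum t) atTop (𝓝 A) :=
  ⟨_, tendsto_sum_increment_iff.mp h.hasSum.tendsto_sum_nat⟩

section Limit

variable {t : List (ℕ × ℝ)} {p w : ℝ}

theorem nonnegOnSegment_sub_one (hw : |w| < 1)
    (h : NonnegOnSegment (p • increment t - Pi.single 0 1) w) :
    NonnegOnSegment (fun i => p * SSum t (i + 1) - 1) w := by
  convert h.sum_range hw using 2 with i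
  simp [sum_sub_distrib, ← mul_sum, sum_range_increment]

theorem nonnegOnSegment_increment_cons_sub_single {x : ℝ} (a : ℕ) (hx : x ≠ 0) (hwx : |w * x| < 1)
    (h : NonnegOnSegment (p • increment t - Pi.single 0 1) (w * x)) :
    NonnegOnSegment ((2 * p / x) • increment ((a, x) :: t) - Pi.single 0 1) w := by
  have hhalf := (nonnegOnSegment_sub_one hwx h).add (.one_sub_half_single hwx)
  convert ((hhalf.div_succ_pow a).const_smul zero_le_two).mul_pow using 1
  ext i
  rcases eq_or_ne i 0 with rfl | hi
  · simp only [increment, Pi.sub_apply, Pi.smul_apply, zero_add, pow_one, Nat.cast_zero, one_pow,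
      div_one, smul_eq_mul, Pi.single_eq_same, Pi.add_apply, Pi.one_apply, sub_add_sub_cancel,
      mul_one, pow_zero]
    field_simp
  · simp only [increment, Pi.sub_apply, Pi.smul_apply, smul_eq_mul, ne_eq, hi, not_false_eq_true,
      Pi.single_eq_of_ne, sub_zero, Pi.add_apply, Pi.one_apply, sub_add_sub_cancel, mul_zero]
    field_simp
    ring

/-- `p` records the sign of the generating function and a lower bound for its absolute value. -/
theorem exists_nonnegOnSegment_increment_sub_single (ht : ∀ q ∈ t, q.2 ≠ 0) :
    ∃ p : ℝ, ∀ r w, PartialProdsLeOne r t → |w| < |r| →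
      NonnegOnSegment (p • increment t - Pi.single 0 1) w := by
  induction t with
  | nil =>
    refine ⟨1, fun r w _ _ => ?_⟩
    simp [increment, NonnegOnSegment, summable_zero]
  | cons q t ih =>
    obtain ⟨a, x⟩ := q
    rw [List.forall_mem_cons] at ht
    obtain ⟨p, hp⟩ := ih ht.2
    refine ⟨2 * p / x, fun r w hr hw => ?_⟩
    have hwx : |w * x| < |r * x| := by
      rw [abs_mul, abs_mul]
      exact mul_lt_mul_of_pos_right hw (abs_pos.mpr ht.1)
    exact nonnegOnSegment_increment_cons_sub_single a ht.1 (hwx.trans_le hr.2.abs_le_one)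
      (hp _ _ hr.2 hwx)

theorem ne_zero_of_tendsto {A : ℝ} (hx : ∀ q ∈ t, q.2 ≠ 0) (ht : PartialProdsLeOne 1 t)
    (hA : Tendsto (SSum t) atTop (𝓝 A)) : A ≠ 0 := by
  obtain ⟨p, hp⟩ := exists_nonnegOnSegment_increment_sub_single hx
  have hle := NonnegOnSegment.sum_range_le_of_tendsto (tendsto_sum_smul_increment hA p)
    (Pi.single_nonneg.mpr zero_le_one)
    (fun w hw => hp 1 w ht (by rw [abs_one, abs_of_pos hw.1]; exact hw.2)) 1
  rintro rfl
  norm_num at hle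

theorem not_exists_tendsto_one_one (hx : ∀ q ∈ t, q.2 ≠ 0) (ht : PartialProdsLeOne 1 t) :
    ¬ ∃ A, Tendsto (SSum ((1, 1) :: t)) atTop (𝓝 A) := by
  rintro ⟨A, hA⟩
  obtain ⟨p, hp⟩ := exists_nonnegOnSegment_increment_sub_single hx
  have hharmonic (N : ℕ) : ∑ i ∈ range N, 1 / ((i : ℝ) + 1) ≤ p * A := by
    refine NonnegOnSegment.sum_range_le_of_tendsto (tendsto_sum_smul_increment hA p)
      (fun i => by positivity) (fun w hw => ?_) N
    have hw1 : |w| < 1 := by rw [abs_of_pos hw.1]; exact hw.2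
    convert (nonnegOnSegment_sub_one hw1 (hp 1 w ht (by rwa [abs_one]))).div_succ using 1
    ext i
    simp only [increment, one_pow, pow_one, one_div, Pi.sub_apply, Pi.smul_apply, smul_eq_mul]
    ring
  obtain ⟨N, hN⟩ :=
    (Real.tendsto_sum_range_one_div_nat_succ_atTop.eventually_gt_atTop (p * A)).exists
  exact hN.not_ge (hharmonic N)

end Limit

section Growth

variable {t : List (ℕ × ℝ)} {r : ℝ} {b : ℕ}

theorem isBigO_of_cons {a : ℕ} {x : ℝ}
    (h : (fun n => r ^ n * SSum ((a, x) :: t) n) =O[atTop] fun n => (n : ℝ) ^ b) :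
    (fun n => (r * x) ^ n * SSum t n) =O[atTop] fun n => (n : ℝ) ^ (a + b) := by
  rw [← map_add_atTop_eq_nat 1, isBigO_map]
  have hcurr : (fun n => r ^ (n + 1) * SSum ((a, x) :: t) (n + 1)) =O[atTop]
      fun n => ((n + 1 : ℕ) : ℝ) ^ b := h.comp_tendsto (tendsto_add_atTop_nat 1)
  have hprev : (fun n => r ^ n * SSum ((a, x) :: t) n) =O[atTop]
      fun n => ((n + 1 : ℕ) : ℝ) ^ b := by
    refine h.trans (.of_norm_le fun n => ?_)
    rw [norm_pow, Real.norm_natCast]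
    gcongr
    exact n.le_succ
  have hdiff := (isBigO_refl (fun n => ((n + 1 : ℕ) : ℝ) ^ a) atTop).mul
    (hcurr.sub (hprev.const_mul_left r))
  refine hdiff.congr (fun n => ?_) fun n => (pow_add _ a b).symm
  rw [Function.comp_apply, cons_succ, increment, Nat.cast_succ]
  field_simp
  ring

theorem partialProdsLeOne_of_isBigO (hx : ∀ q ∈ t, q.2 ≠ 0)
    (h : (fun n => r ^ n * SSum t n) =O[atTop] fun n => (n : ℝ) ^ b) : PartialProdsLeOne r t := by
  induction t generalizing r b with
  | nil =>
    by_contra hr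
    have hlim := tendsto_zero_of_isBigO_pow_mul (not_le.mp hr) h
    exact one_ne_zero (tendsto_nhds_unique tendsto_const_nhds hlim)
  | cons q t ih =>
    have htail := ih (fun q' hq' => hx q' (List.mem_cons_of_mem q hq')) (isBigO_of_cons h)
    refine ⟨?_, htail⟩
    by_contra! hr
    have hone : PartialProdsLeOne 1 (q :: t) := by
      refine ⟨abs_one.le, htail.of_abs_le ?_⟩
      rw [one_mul, abs_mul]
      exact le_mul_of_one_le_left (abs_nonneg _) hr.le
    exact ne_zero_of_tendsto hx hone (tendsto_zero_of_isBigO_pow_mul hr h) rfl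

theorem partialProdsLeOne_of_tendsto {A : ℝ} (hx : ∀ q ∈ t, q.2 ≠ 0)
    (hA : Tendsto (SSum t) atTop (𝓝 A)) : PartialProdsLeOne 1 t := by
  refine partialProdsLeOne_of_isBigO (b := 0) hx ?_
  simpa only [one_pow, one_mul, pow_zero] using hA.isBigO_one ℝ

end Growth

section UpperBounds

variable {a : ℕ} {c x : ℝ} {t : List (ℕ × ℝ)}

theorem abs_pow_mul_le (ht : ∀ q ∈ t, 0 < q.1) (h : PartialProdsLeOne c t) {n : ℕ} (hn : 0 < n) :
    |c ^ n * SSum t n| ≤ 2 ^ t.length * √(n : ℝ) := by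
  induction t generalizing c n with
  | nil =>
    simp only [SSum, mul_one, List.length_nil, pow_zero, one_mul, abs_pow]
    exact (pow_le_one₀ (abs_nonneg c) h).trans
      (Real.one_le_sqrt.mpr (Nat.one_le_cast.mpr hn))
  | cons q t ih =>
    obtain ⟨a, x⟩ := q
    rw [List.forall_mem_cons] at ht
    have hterm (i : ℕ) (hi : i ∈ Icc 1 n) :
        |c ^ n * (x ^ i / (i : ℝ) ^ a * SSum t i)| ≤ 2 ^ t.length * (√(i : ℝ))⁻¹ := by
      obtain ⟨hi, hin⟩ := mem_Icc.mp hi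
      have hi' : (1 : ℝ) ≤ i := Nat.one_le_cast.mpr hi
      calc |c ^ n * (x ^ i / (i : ℝ) ^ a * SSum t i)|
          = |c| ^ n * |x ^ i * SSum t i| / (i : ℝ) ^ a := by
            rw [div_mul_eq_mul_div, ← mul_div_assoc, abs_div, abs_mul, abs_pow,
              abs_of_nonneg (by positivity : (0 : ℝ) ≤ (i : ℝ) ^ a)]
        _ ≤ |c| ^ i * |x ^ i * SSum t i| / (i : ℝ) ^ 1 := by
            gcongr ?_ * _ / ?_
            · exact pow_le_pow_of_le_one (abs_nonneg c) h.1 hin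
            · exact pow_le_pow_right₀ hi' ht.1
        _ = |(c * x) ^ i * SSum t i| / i := by
            rw [← abs_pow, ← abs_mul, ← mul_assoc, mul_pow, pow_one]
        _ ≤ 2 ^ t.length * √(i : ℝ) / i := by gcongr; exact ih ht.2 h.2 hi
        _ = 2 ^ t.length * (√(i : ℝ))⁻¹ := by rw [mul_div_assoc, Real.sqrt_div_self]
    calc |c ^ n * SSum ((a, x) :: t) n|
        ≤ ∑ i ∈ Icc 1 n, 2 ^ t.length * (√(i : ℝ))⁻¹ := by
          rw [SSum, mul_sum]
          exact (abs_sum_le_sum_abs _ _).trans (sum_le_sum hterm)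
      _ ≤ 2 ^ t.length * (2 * √(n : ℝ)) := by
          rw [← mul_sum]
          gcongr
          exact sum_Icc_inv_sqrt_le n
      _ = 2 ^ ((a, x) :: t).length * √(n : ℝ) := by rw [List.length_cons, pow_succ, mul_assoc]

theorem abs_pow_mul_increment_cons_le (c : ℝ) (ht : ∀ q ∈ t, 0 < q.1)
    (h : PartialProdsLeOne (c * x) t) (i : ℕ) :
    |c ^ (i + 1) * increment ((a, x) :: t) i| ≤
      2 ^ t.length * (√((i : ℝ) + 1) / ((i : ℝ) + 1) ^ a) := by
  have hsplit : c ^ (i + 1) * increment ((a, x) :: t) i =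
      (c * x) ^ (i + 1) * SSum t (i + 1) / ((i : ℝ) + 1) ^ a := by
    rw [increment, mul_pow]
    ring
  rw [hsplit, abs_div, abs_of_nonneg (by positivity : (0 : ℝ) ≤ ((i : ℝ) + 1) ^ a),
    ← mul_div_assoc]
  gcongr
  exact_mod_cast abs_pow_mul_le ht h i.succ_pos

theorem abs_pow_mul_increment_le (ht : ∀ q ∈ t, 0 < q.1) (h : PartialProdsLeOne c t) (i : ℕ) :
    |c ^ (i + 1) * increment t i| ≤ 2 ^ t.length / √((i : ℝ) + 1) := by
  rcases t with _ | ⟨⟨a, x⟩, t⟩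
  · rcases eq_or_ne i 0 with rfl | hi
    · simpa [increment] using h.abs_le_one
    · simp [increment, hi]
  · rw [List.forall_mem_cons] at ht
    calc |c ^ (i + 1) * increment ((a, x) :: t) i|
        ≤ 2 ^ t.length * (√((i : ℝ) + 1) / ((i : ℝ) + 1) ^ a) :=
          abs_pow_mul_increment_cons_le c ht.2 h.2 i
      _ ≤ 2 ^ (t.length + 1) * (√((i : ℝ) + 1) / ((i : ℝ) + 1) ^ 1) := by
          gcongr
          · exact one_le_two
          · exact t.length.le_succ
          · exact le_add_of_nonneg_left i.cast_nonneg
          · exact ht.1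
      _ = 2 ^ ((a, x) :: t).length / √((i : ℝ) + 1) := by
          rw [pow_one, Real.sqrt_div_self, List.length_cons, div_eq_mul_inv]

theorem summable_increment_cons_of_two_le (ha : 2 ≤ a) (ht : ∀ q ∈ t, 0 < q.1)
    (h : PartialProdsLeOne x t) : Summable (increment ((a, x) :: t)) := by
  refine (summable_sqrt_div_sq.mul_left (2 ^ t.length)).of_norm_bounded fun i => ?_
  have hbound := abs_pow_mul_increment_cons_le (a := a) 1 ht (by rwa [one_mul]) i
  rw [one_pow, one_mul] at hbound
  refine hbound.trans ?_
  gcongr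
  exact le_add_of_nonneg_left i.cast_nonneg

theorem summable_abs_increment_div_succ_mul_pow (hx : x ≠ 0) (ht : ∀ q ∈ t, 0 < q.1)
    (h : PartialProdsLeOne x t) :
    Summable fun i => |increment t i| / ((i : ℝ) + 1) * |x| ^ i := by
  rw [← summable_mul_left_iff (abs_ne_zero.mpr hx)]
  refine (summable_sqrt_div_sq.mul_left (2 ^ t.length)).of_nonneg_of_le
    (fun i => by positivity) fun i => ?_
  calc |x| * (|increment t i| / ((i : ℝ) + 1) * |x| ^ i)
      = |x ^ (i + 1) * increment t i| / ((i : ℝ) + 1) := by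
        rw [abs_mul, abs_pow]
        ring
    _ ≤ 2 ^ t.length / √((i : ℝ) + 1) / ((i : ℝ) + 1) := by
        gcongr
        exact abs_pow_mul_increment_le ht h i
    _ = 2 ^ t.length * (√((i : ℝ) + 1) / ((i : ℝ) + 1) ^ 2) :=
        div_sqrt_div_self _ _

/-- Since `1 / (i + 1) ≤ 1 / (l + 1)` for `l ≤ i`, the increments are dominated by the Cauchy
product of a summable series with a geometric one. -/
theorem summable_increment_cons_of_abs_lt_one (ha : 0 < a) (hx : x ≠ 0) (hx1 : |x| < 1)
    (ht : ∀ q ∈ t, 0 < q.1) (h : PartialProdsLeOne x t) : Summable (increment ((a, x) :: t)) := by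
  have hprod := (hasSum_sum_range_mul_pow (w := |x|) (by rwa [Real.norm_eq_abs, abs_abs])
    (summable_abs_increment_div_succ_mul_pow hx ht h).norm).summable
  refine (hprod.mul_left |x|).of_norm_bounded fun i => ?_
  have hi : (1 : ℝ) ≤ (i : ℝ) + 1 := le_add_of_nonneg_left i.cast_nonneg
  calc ‖increment ((a, x) :: t) i‖
      = |x| ^ (i + 1) * (|SSum t (i + 1)| / ((i : ℝ) + 1) ^ a) := by
        rw [increment, Real.norm_eq_abs, abs_mul, abs_div, abs_pow,
          abs_of_nonneg (by positivity : (0 : ℝ) ≤ ((i : ℝ) + 1) ^ a)]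
        ring
    _ ≤ |x| ^ (i + 1) * ((∑ l ∈ range (i + 1), |increment t l|) / ((i : ℝ) + 1) ^ 1) := by
        rw [← sum_range_increment]
        gcongr
        · exact abs_sum_le_sum_abs _ _
        · exact ha
    _ ≤ |x| ^ (i + 1) * ∑ l ∈ range (i + 1), |increment t l| / ((l : ℝ) + 1) := by
        rw [pow_one, sum_div]
        gcongr with l hl
        exact mem_range_succ_iff.mp hl
    _ = |x| * ((∑ l ∈ range (i + 1), |increment t l| / ((l : ℝ) + 1)) * |x| ^ i) := by ring

theorem exists_tendsto_one_neg_one (ht : ∀ q ∈ t, 0 < q.1) (h : PartialProdsLeOne 1 t) :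
    ∃ A, Tendsto (SSum ((1, -1) :: t)) atTop (𝓝 A) := by
  have hbound (i : ℕ) : |SSum t (i + 1)| ≤ 2 ^ t.length * √((i : ℝ) + 1) := by
    simpa using abs_pow_mul_le ht h i.succ_pos
  have hdiff (i : ℕ) : |SSum t (i + 1 + 1) - SSum t (i + 1)| ≤ 2 ^ t.length / √((i : ℝ) + 1) := by
    have hincr := abs_pow_mul_increment_le ht h (i + 1)
    rw [one_pow, one_mul] at hincr
    rw [succ_succ, add_sub_cancel_left]
    refine hincr.trans ?_
    gcongr
    exact i.le_succ
  obtain ⟨A, hA⟩ := exists_tendsto_alternating_sum_div_succ hbound hdiff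
  refine ⟨-A, tendsto_sum_increment_iff.mp (hA.neg.congr fun n => ?_)⟩
  rw [← sum_neg_distrib]
  refine sum_congr rfl fun i _ => ?_
  rw [increment]
  ring

end UpperBounds

theorem cons_conditionally_convergent_iff {a : ℕ} {x : ℝ} {t : List (ℕ × ℝ)} (ha : 0 < a)
    (hx : x ≠ 0) (hta : ∀ q ∈ t, 0 < q.1) (htx : ∀ q ∈ t, q.2 ≠ 0) :
    ((∃ A, Tendsto (SSum ((a, x) :: t)) atTop (𝓝 A)) ∧
      ¬ ∃ A, Tendsto (SSum ((a, |x|) :: t.map (Prod.map id abs))) atTop (𝓝 A)) ↔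
      a = 1 ∧ x = -1 ∧ PartialProdsLeOne 1 t := by
  have hta' : ∀ q ∈ t.map (Prod.map id abs), 0 < q.1 := List.forall_mem_map.mpr hta
  have htx' : ∀ q ∈ t.map (Prod.map id (abs : ℝ → ℝ)), q.2 ≠ 0 :=
    List.forall_mem_map.mpr fun q hq => abs_ne_zero.mpr (htx q hq)
  constructor
  · rintro ⟨⟨A, hA⟩, habs⟩
    have hprods : PartialProdsLeOne x t := by
      simpa only [one_mul] using
        (partialProdsLeOne_of_tendsto (List.forall_mem_cons.mpr ⟨hx, htx⟩) hA).2
    have hprods' := PartialProdsLeOne.map_abs_iff.mpr hprods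
    have ha1 : a = 1 := by
      by_contra hne
      exact habs (exists_tendsto_of_summable_increment
        (summable_increment_cons_of_two_le (by lia) hta' hprods'))
    have hx1 : |x| = 1 := by
      refine hprods.abs_le_one.antisymm (not_lt.mp fun hlt => habs ?_)
      exact exists_tendsto_of_summable_increment (summable_increment_cons_of_abs_lt_one ha
        (abs_ne_zero.mpr hx) (by rwa [abs_abs]) hta' hprods')
    have hone : PartialProdsLeOne 1 t := hprods.of_abs_le (by rw [abs_one, hx1])
    refine ⟨ha1, (eq_or_eq_neg_of_abs_eq hx1).resolve_left ?_, hone⟩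
    rintro rfl
    exact not_exists_tendsto_one_one htx hone ⟨A, ha1 ▸ hA⟩
  · rintro ⟨rfl, rfl, hone⟩
    have hone' : PartialProdsLeOne 1 (t.map (Prod.map id abs)) := by
      simpa only [abs_one] using PartialProdsLeOne.map_abs_iff.mpr hone
    refine ⟨exists_tendsto_one_neg_one hta hone, ?_⟩
    rw [abs_neg, abs_one]
    exact not_exists_tendsto_one_one htx' hone'

end SSum

/-- Conditional convergence criterion for S-sums of depth `k + 1 ≥ 1`:
`S_{a₀,…,a_k}(x₀,…,x_k; n)` is convergent but not absolutely convergent as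
`n → ∞` iff `a₀ = 1`, `x₀ = −1` and all products `|x₁⋯x_j| ≤ 1`. -/
theorem SSum_conditional_convergence_criterion (k : ℕ)
    (a : Fin (k + 1) → ℕ) (x : Fin (k + 1) → ℝ)
    (ha : ∀ i, 0 < a i) (hx : ∀ i, x i ≠ 0) :
    ((∃ L : ℝ, Tendsto (fun n => SSum (List.ofFn fun i => (a i, x i)) n)
        atTop (nhds L)) ∧
      ¬ (∃ L : ℝ, Tendsto (fun n => SSum (List.ofFn fun i => (a i, |x i|)) n)
          atTop (nhds L))) ↔
      (a 0 = 1 ∧ x 0 = -1 ∧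
        ∀ j : Fin (k + 1), |∏ i ∈ Finset.Ioc 0 j, x i| ≤ 1) := by
  have habs : (List.ofFn fun i : Fin k => (a i.succ, |x i.succ|)) =
      (List.ofFn fun i : Fin k => (a i.succ, x i.succ)).map (Prod.map id abs) := by
    rw [List.map_ofFn]
    rfl
  have hprods := PartialProdsLeOne.ofFn_succ_iff (r := 1) (a := a) (x := x)
  simp only [one_mul] at hprods
  rw [List.ofFn_succ, List.ofFn_succ, habs, ← hprods]
  exact SSum.cons_conditionally_convergent_iff (ha 0) (hx 0)
    (List.forall_mem_ofFn_iff.mpr fun i => ha i.succ)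
    (List.forall_mem_ofFn_iff.mpr fun i => hx i.succ)
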